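/- Let f = x·y·z·w·(x+y)·(y+z)·(y−w)·(x−y−z+w) ∈ S = ℂ[x,y,z,w] (the defining polynomial of the rigid Cynk–Szemberg arrangement 𝒜₃). The S-module AR(f) = {(a₁,a₂,a₃,a₄) ∈ S⁴ : a₁∂ₓf + a₂∂_yf + a₃∂_zf + a₄∂_wf = 0} is generated by five homogeneous syzygies, each of degree 3, and every nonzero homogeneous element of AR(f) has degree at least 3. -/

import Mathlib

open MvPolynomial

noncomputable section

/-- The polynomial ring `S = ℂ[x,y,z,w]`, with `x = X 0`, `y = X 1`, `z = X 2`, `w = X 3`. -/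
abbrev S4 : Type := MvPolynomial (Fin 4) ℂ

/-- The linear form `c₀·x + c₁·y + c₂·z + c₃·w` with coefficient vector `c`. -/
noncomputable def linForm (c : Fin 4 → ℂ) : S4 := ∑ i, C (c i) * X i

/-- A polynomial derivation `θ = a₁∂ₓ + a₂∂_y + a₃∂_z + a₄∂_w` of `S` is identified with
its coefficient tuple `a : Fin 4 → S`; the linear map `derMap f` sends `a` to `θ(f)`. -/
noncomputable def derMap (f : S4) : (Fin 4 → S4) →ₗ[S4] S4 where
  toFun a := ∑ i, a i * pderiv i f
  map_add' a b := by simp [add_mul, Finset.sum_add_distrib]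
  map_smul' c a := by simp [Finset.mul_sum, mul_assoc]

/-- The derivation module `D(𝒜)` of the central arrangement whose hyperplanes are the kernels
of the linear forms `linForm (α H)`: all derivations `θ` with `θ(α_H) ∈ S·α_H` for every `H`. -/
noncomputable def derivModule {ι : Type} (α : ι → (Fin 4 → ℂ)) :
    Submodule S4 (Fin 4 → S4) :=
  ⨅ H, Submodule.comap (derMap (linForm (α H))) (Ideal.span {linForm (α H)})

end

/-- The defining polynomial of the rigid Cynk–Szemberg arrangement 𝒜₃:
`f = xyzw(x+y)(y+z)(y-w)(x-y-z+w)`. -/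
noncomputable def fQ3 : S4 :=
  X 0 * X 1 * X 2 * X 3 * (X 0 + X 1) * (X 1 + X 2) * (X 1 - X 3) * (X 0 - X 1 - X 2 + X 3)

namespace ARQ3

theorem derMap_mul (f g : S4) (a : Fin 4 → S4) :
    derMap (f * g) a = derMap f a * g + f * derMap g a := by
  simp only [derMap, LinearMap.coe_mk, AddHom.coe_mk, Derivation.leibniz, smul_eq_mul,
    Finset.sum_mul, Finset.mul_sum, ← Finset.sum_add_distrib]
  exact Finset.sum_congr rfl fun i _ => by ring

theorem derMap_add (f g : S4) (a : Fin 4 → S4) :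
    derMap (f + g) a = derMap f a + derMap g a := by
  simp [derMap, mul_add, Finset.sum_add_distrib]

theorem derMap_sub (f g : S4) (a : Fin 4 → S4) :
    derMap (f - g) a = derMap f a - derMap g a := by
  simp [derMap, mul_sub, Finset.sum_sub_distrib]

theorem derMap_X (i : Fin 4) (a : Fin 4 → S4) : derMap (X i) a = a i := by
  simp [derMap, pderiv_X, Pi.single_apply]

/-- An ideal that is the kernel of a retraction of the polynomial ring is prime. -/
theorem isPrime_of_retraction (I : Ideal S4) (s : Fin 4 → S4)
    (hs : ∀ i, X i - s i ∈ I) (hI : ∀ p ∈ I, aeval s p = (0 : S4)) : I.IsPrime := by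
  have key : ∀ p : S4, p - aeval s p ∈ I := fun p => by
    have : (Ideal.Quotient.mkₐ ℂ I).comp (aeval s) = Ideal.Quotient.mkₐ ℂ I := by
      ext i
      simpa using (Ideal.Quotient.eq.2 (hs i)).symm
    exact Ideal.Quotient.eq.1 (AlgHom.congr_fun this p).symm
  have hker : I = RingHom.ker (aeval s : S4 →ₐ[ℂ] S4) := by
    ext p
    refine ⟨hI p, fun hp => ?_⟩
    have h := key p
    rw [RingHom.mem_ker] at hp
    rwa [hp, sub_zero] at h
  rw [hker]
  exact RingHom.ker_isPrime _

/-- A form `l` killed by a substitution that moves variables by multiples of `l` is prime. -/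
theorem prime_of_retraction (l : S4) (s : Fin 4 → S4) (hl : l ≠ 0)
    (hs : ∀ i, l ∣ X i - s i) (h0 : aeval s l = (0 : S4)) : Prime l := by
  rw [← Ideal.span_singleton_prime hl]
  refine isPrime_of_retraction _ s (fun i => Ideal.mem_span_singleton.2 (hs i)) fun p hp => ?_
  obtain ⟨c, rfl⟩ := Ideal.mem_span_singleton.1 hp
  rw [map_mul, h0, zero_mul]

theorem isPrime_span_pair_of_retraction (l m : S4) (s : Fin 4 → S4)
    (hs : ∀ i, X i - s i ∈ Ideal.span {l, m}) (hl : aeval s l = (0 : S4))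
    (hm : aeval s m = (0 : S4)) : (Ideal.span {l, m}).IsPrime := by
  refine isPrime_of_retraction _ s hs fun p hp => ?_
  obtain ⟨c, d, rfl⟩ := Ideal.mem_span_pair.1 hp
  rw [map_add, map_mul, map_mul, hl, hm, mul_zero, mul_zero, add_zero]

theorem not_dvd_of_eval (v : Fin 4 → ℂ) {l g : S4} (hl : eval v l = 0) (hg : eval v g ≠ 0) :
    ¬ l ∣ g := by
  rintro ⟨c, rfl⟩
  exact hg (by rw [map_mul, hl, zero_mul])

theorem ne_zero_of_eval (v : Fin 4 → ℂ) {l : S4} (hl : eval v l ≠ 0) : l ≠ 0 := by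
  rintro rfl
  exact hl (map_zero _)

/-- A derivation annihilating `l * g` is logarithmic along the prime `l` not dividing `g`. -/
theorem dvd_derMap {l g : S4} (hp : Prime l) (hg : ¬ l ∣ g) {a : Fin 4 → S4}
    (h : derMap (l * g) a = 0) : l ∣ derMap l a := by
  rw [derMap_mul] at h
  refine (hp.dvd_or_dvd (a := derMap l a) (b := g) ?_).resolve_right hg
  exact ⟨-derMap g a, by linear_combination h⟩

theorem prime_X_add_X {i j : Fin 4} (hij : i ≠ j) : Prime (X i + X j : S4) := by
  refine prime_of_retraction _ (Function.update X i (-X j)) ?_ (fun k => ?_) ?_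
  · exact ne_zero_of_eval (Pi.single i 1) (by simp [hij.symm])
  · obtain rfl | hk := eq_or_ne k i
    · simp
    · simp [hk]
  · simp [hij.symm]

theorem prime_X_sub_X {i j : Fin 4} (hij : i ≠ j) : Prime (X i - X j : S4) := by
  refine prime_of_retraction _ (Function.update X i (X j)) ?_ (fun k => ?_) ?_
  · exact ne_zero_of_eval (Pi.single i 1) (by simp [hij.symm])
  · obtain rfl | hk := eq_or_ne k i
    · simp
    · simp [hk]
  · simp [hij.symm]

/-- The linear form `x - y - z + w`. -/
noncomputable def ell : S4 := X 0 - X 1 - X 2 + X 3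

theorem prime_ell : Prime ell := by
  refine prime_of_retraction _ ![X 1 + X 2 - X 3, X 1, X 2, X 3] ?_ (fun k => ?_) ?_
  · exact ne_zero_of_eval ![1, 0, 0, 0] (by simp [ell])
  · fin_cases k
    · exact ⟨1, by simp [ell]; ring⟩
    all_goals simp
  · simp [ell]
    ring

theorem isPrime_ell_u : (Ideal.span {ell, X 1 + X 2 - X 3}).IsPrime := by
  refine isPrime_span_pair_of_retraction _ _ ![0, X 1, X 2, X 1 + X 2] (fun k => ?_) ?_ ?_
  · rw [Ideal.mem_span_pair]
    fin_cases k
    · exact ⟨1, 1, by simp [ell]⟩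
    · exact ⟨0, 0, by simp⟩
    · exact ⟨0, 0, by simp⟩
    · exact ⟨0, -1, by simp⟩
  · simp [ell]
  · simp

theorem isPrime_ell_v : (Ideal.span {ell, X 1 - X 3}).IsPrime := by
  refine isPrime_span_pair_of_retraction _ _ ![X 2, X 1, X 2, X 1] (fun k => ?_) ?_ ?_
  · rw [Ideal.mem_span_pair]
    fin_cases k
    · exact ⟨1, 1, by simp [ell]; ring⟩
    · exact ⟨0, 0, by simp⟩
    · exact ⟨0, 0, by simp⟩
    · exact ⟨0, -1, by simp⟩
  · simp [ell]
  · simp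

theorem isPrime_ell_t : (Ideal.span {ell, X 1 + X 2}).IsPrime := by
  refine isPrime_span_pair_of_retraction _ _ ![-X 3, X 1, -X 1, X 3] (fun k => ?_) ?_ ?_
  · rw [Ideal.mem_span_pair]
    fin_cases k
    · exact ⟨1, 1, by simp [ell]; ring⟩
    · exact ⟨0, 0, by simp⟩
    · exact ⟨0, 1, by simp; ring⟩
    · exact ⟨0, 0, by simp⟩
  · simp [ell]
  · simp

theorem notMem_span_pair_of_eval (v : Fin 4 → ℂ) {l m g : S4} (hl : eval v l = 0)
    (hm : eval v m = 0) (hg : eval v g ≠ 0) : g ∉ Ideal.span {l, m} := by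
  intro h
  obtain ⟨c, d, rfl⟩ := Ideal.mem_span_pair.1 h
  exact hg (by simp [hl, hm])

theorem fQ3_ne_zero : fQ3 ≠ 0 :=
  ne_zero_of_eval ![1, 1, 1, 2] (by simp [fQ3]; norm_num)

theorem derMap_fQ3_euler : derMap fQ3 X = 8 * fQ3 := by
  simp only [fQ3, derMap_mul, derMap_add, derMap_sub, derMap_X]
  ring

/-- The quotient `δ f / f` for the derivation `δ = x(x+y)p ∂ₓ + z(y+z)q ∂_z + w(y-w)r ∂_w`
satisfying `δ(x-y-z+w) = (x-y-z+w) m`. -/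
noncomputable def eulerCoeff (p q r m : S4) : S4 :=
  (2 * X 0 + X 1) * p + (X 1 + 2 * X 2) * q + (X 1 - 2 * X 3) * r + m

/-- The derivation `8 δ - (δ f / f) E`, where `E` is the Euler derivation and
`δ = x(x+y)p ∂ₓ + z(y+z)q ∂_z + w(y-w)r ∂_w` satisfies `δ(x-y-z+w) = (x-y-z+w) m`. -/
noncomputable def syz (p q r m : S4) : Fin 4 → S4 :=
  let k := eulerCoeff p q r m
  ![8 * (X 0 * (X 0 + X 1) * p) - k * X 0, -(k * X 1),
    8 * (X 2 * (X 1 + X 2) * q) - k * X 2, 8 * (X 3 * (X 1 - X 3) * r) - k * X 3]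

theorem syz_mem_ker (p q r m : S4)
    (h : X 0 * (X 0 + X 1) * p - X 2 * (X 1 + X 2) * q + X 3 * (X 1 - X 3) * r = ell * m) :
    syz p q r m ∈ LinearMap.ker (derMap fQ3) := by
  rw [LinearMap.mem_ker]
  simp only [fQ3, derMap_mul, derMap_add, derMap_sub, derMap_X, syz, eulerCoeff]
  simp
  rw [ell] at h
  linear_combination
    8 * (X 0 * X 1 * X 2 * X 3 * (X 0 + X 1) * (X 1 + X 2) * (X 1 - X 3)) * h

theorem isHomogeneous_ofNat_mul {p : S4} {d : ℕ} (n : ℕ) [n.AtLeastTwo]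
    (hp : p.IsHomogeneous d) : ((ofNat(n) : S4) * p).IsHomogeneous d := by
  have := (isHomogeneous_C (Fin 4) (OfNat.ofNat n : ℂ)).mul hp
  rwa [zero_add, map_ofNat] at this

theorem syz_isHomogeneous {p q r m : S4} (hp : p.IsHomogeneous 1) (hq : q.IsHomogeneous 1)
    (hr : r.IsHomogeneous 1) (hm : m.IsHomogeneous 2) (i : Fin 4) :
    (syz p q r m i).IsHomogeneous 3 := by
  have hX : ∀ i : Fin 4, (X i : S4).IsHomogeneous 1 := isHomogeneous_X ℂ
  have hX2 : ∀ i : Fin 4, (2 * X i : S4).IsHomogeneous 1 :=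
    fun i => isHomogeneous_ofNat_mul 2 (hX i)
  have hk : (eulerCoeff p q r m).IsHomogeneous 2 :=
    ((((hX2 0).add (hX 1)).mul hp).add (((hX 1).add (hX2 2)).mul hq)).add
      (((hX 1).sub (hX2 3)).mul hr) |>.add hm
  fin_cases i
  · exact (isHomogeneous_ofNat_mul 8 (((hX 0).mul ((hX 0).add (hX 1))).mul hp)).sub
      (hk.mul (hX 0))
  · exact (hk.mul (hX 1)).neg
  · exact (isHomogeneous_ofNat_mul 8 (((hX 2).mul ((hX 1).add (hX 2))).mul hq)).sub
      (hk.mul (hX 2))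
  · exact (isHomogeneous_ofNat_mul 8 (((hX 3).mul ((hX 1).sub (hX 3))).mul hr)).sub
      (hk.mul (hX 3))

/-- The five cubic generators of `AR(f)`. -/
noncomputable def gens : Fin 5 → (Fin 4 → S4) :=
  ![syz ell 0 0 (X 0 * (X 0 + X 1)), syz 0 ell 0 (-(X 2 * (X 1 + X 2))),
    syz 0 0 ell (X 3 * (X 1 - X 3)),
    syz (X 2 + X 3) ((X 1 + X 2) + (X 1 - X 3)) (-((X 1 + X 2) + (X 1 - X 3)))
      ((X 2 + X 3) * (X 0 + X 1 + (X 1 + X 2 - X 3))),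
    syz (X 2) ((X 1 + X 2 - X 3) + (X 1 - X 3)) (X 2)
      (X 2 * (X 0 + X 1 + (X 1 + X 2 - X 3)))]

theorem gens_mem_ker (j : Fin 5) : gens j ∈ LinearMap.ker (derMap fQ3) := by
  fin_cases j <;> exact syz_mem_ker _ _ _ _ (by rw [ell]; ring)

theorem gens_isHomogeneous (j : Fin 5) (i : Fin 4) : (gens j i).IsHomogeneous 3 := by
  have hX : ∀ i : Fin 4, (X i : S4).IsHomogeneous 1 := isHomogeneous_X ℂ
  have h0 : (0 : S4).IsHomogeneous 1 := isHomogeneous_zero _ _ _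
  have hl : ell.IsHomogeneous 1 := (((hX 0).sub (hX 1)).sub (hX 2)).add (hX 3)
  have hu := ((hX 1).add (hX 2)).sub (hX 3)
  have ht := (hX 1).add (hX 2)
  have hv := (hX 1).sub (hX 3)
  have hm := ((hX 0).add (hX 1)).add hu
  fin_cases j
  · exact syz_isHomogeneous hl h0 h0 ((hX 0).mul ((hX 0).add (hX 1))) i
  · exact syz_isHomogeneous h0 hl h0 ((hX 2).mul ht).neg i
  · exact syz_isHomogeneous h0 h0 hl ((hX 3).mul hv) i
  · exact syz_isHomogeneous ((hX 2).add (hX 3)) (ht.add hv) (ht.add hv).neg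
      (((hX 2).add (hX 3)).mul hm) i
  · exact syz_isHomogeneous (hX 2) (hu.add hv) (hX 2) ((hX 2).mul hm) i

/-- Every logarithmic derivation is, up to a multiple of the Euler derivation, of the form
`x(x+y)p ∂ₓ + z(y+z)q ∂_z + w(y-w)r ∂_w` and preserves the ideal of `x-y-z+w`. -/
theorem exists_of_mem_ker {a : Fin 4 → S4} (ha : derMap fQ3 a = 0) :
    ∃ b p q r : S4, a 0 = b * X 0 + X 0 * (X 0 + X 1) * p ∧ a 1 = b * X 1 ∧
      a 2 = b * X 2 + X 2 * (X 1 + X 2) * q ∧ a 3 = b * X 3 + X 3 * (X 1 - X 3) * r ∧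
      ell ∣ X 0 * (X 0 + X 1) * p - X 2 * (X 1 + X 2) * q + X 3 * (X 1 - X 3) * r := by
  have key : ∀ (l g : S4) (v : Fin 4 → ℂ), Prime l → fQ3 = l * g → eval v l = 0 →
      eval v g ≠ 0 → l ∣ derMap l a := fun l g v hl hf h1 h2 =>
    dvd_derMap hl (not_dvd_of_eval v h1 h2) (by rw [← hf, ha])
  have h0 := key (X 0) (X 1 * X 2 * X 3 * (X 0 + X 1) * (X 1 + X 2) * (X 1 - X 3) *
    (X 0 - X 1 - X 2 + X 3)) ![0, 1, 2, 5] X_prime (by rw [fQ3]; ring) (by simp)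
    (by simp; norm_num)
  have h1 := key (X 1) (X 0 * X 2 * X 3 * (X 0 + X 1) * (X 1 + X 2) * (X 1 - X 3) *
    (X 0 - X 1 - X 2 + X 3)) ![1, 0, 2, 5] X_prime (by rw [fQ3]; ring) (by simp)
    (by simp; norm_num)
  have h2 := key (X 2) (X 0 * X 1 * X 3 * (X 0 + X 1) * (X 1 + X 2) * (X 1 - X 3) *
    (X 0 - X 1 - X 2 + X 3)) ![1, 2, 0, 5] X_prime (by rw [fQ3]; ring) (by simp)
    (by simp; norm_num)
  have h3 := key (X 3) (X 0 * X 1 * X 2 * (X 0 + X 1) * (X 1 + X 2) * (X 1 - X 3) *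
    (X 0 - X 1 - X 2 + X 3)) ![1, 2, 5, 0] X_prime (by rw [fQ3]; ring) (by simp)
    (by simp; norm_num)
  have h4 := key (X 0 + X 1) (X 0 * X 1 * X 2 * X 3 * (X 1 + X 2) * (X 1 - X 3) *
    (X 0 - X 1 - X 2 + X 3)) ![-1, 1, 2, 7] (prime_X_add_X (by decide)) (by rw [fQ3]; ring)
    (by simp) (by simp; norm_num)
  have h5 := key (X 1 + X 2) (X 0 * X 1 * X 2 * X 3 * (X 0 + X 1) * (X 1 - X 3) *
    (X 0 - X 1 - X 2 + X 3)) ![3, 1, -1, 7] (prime_X_add_X (by decide)) (by rw [fQ3]; ring)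
    (by simp) (by simp; norm_num)
  have h6 := key (X 1 - X 3) (X 0 * X 1 * X 2 * X 3 * (X 0 + X 1) * (X 1 + X 2) *
    (X 0 - X 1 - X 2 + X 3)) ![3, 1, 1, 1] (prime_X_sub_X (by decide)) (by rw [fQ3]; ring)
    (by simp) (by simp; norm_num)
  have h7 := key ell (X 0 * X 1 * X 2 * X 3 * (X 0 + X 1) * (X 1 + X 2) * (X 1 - X 3))
    ![1, 1, 2, 2] prime_ell (by rw [fQ3, ell]; ring)
    (by simp [ell]) (by simp; norm_num)
  simp only [ell, derMap_add, derMap_sub, derMap_X] at h0 h1 h2 h3 h4 h5 h6 h7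
  obtain ⟨a', ha'⟩ := h0
  obtain ⟨b, hb⟩ := h1
  obtain ⟨c', hc'⟩ := h2
  obtain ⟨d', hd'⟩ := h3
  obtain ⟨e4, h4⟩ := h4
  obtain ⟨e5, h5⟩ := h5
  obtain ⟨e6, h6⟩ := h6
  obtain ⟨e7, h7⟩ := h7
  have hp : (X 0 + X 1 : S4) ∣ a' - b :=
    ((prime_X_add_X (by decide)).dvd_or_dvd (a := X 0)
      ⟨e4 - b, by linear_combination h4 - ha' - hb⟩).resolve_left
      (not_dvd_of_eval ![1, -1, 0, 0] (by simp) (by simp))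
  have hq : (X 1 + X 2 : S4) ∣ c' - b :=
    ((prime_X_add_X (by decide)).dvd_or_dvd (a := X 2)
      ⟨e5 - b, by linear_combination h5 - hc' - hb⟩).resolve_left
      (not_dvd_of_eval ![0, -1, 1, 0] (by simp) (by simp))
  have hr : (X 1 - X 3 : S4) ∣ d' - b :=
    ((prime_X_sub_X (by decide)).dvd_or_dvd (a := X 3)
      ⟨b - e6, by linear_combination hb - h6 - hd'⟩).resolve_left
      (not_dvd_of_eval ![0, 1, 0, 1] (by simp) (by simp))
  obtain ⟨p, hp⟩ := hp
  obtain ⟨q, hq⟩ := hq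
  obtain ⟨r, hr⟩ := hr
  refine ⟨b, p, q, r, ?_, ?_, ?_, ?_, e7 - b, ?_⟩
  · linear_combination ha' + X 0 * hp
  · linear_combination hb
  · linear_combination hc' + X 2 * hq
  · linear_combination hd' + X 3 * hr
  · rw [ell]
    linear_combination h7 - ha' - X 0 * hp + hb + hc' + X 2 * hq - hd' - X 3 * hr

/-- Modulo `ell`, the syzygies of `uv`, `ut`, `tv` with `u = y+z-w`, `v = y-w`, `t = y+z` are
generated by the Koszul-type relations. -/
theorem exists_of_ell_dvd {P Q T : S4}
    (h : ell ∣ (X 1 + X 2 - X 3) * (X 1 - X 3) * P + (X 1 + X 2 - X 3) * (X 1 + X 2) * Q +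
      (X 1 + X 2) * (X 1 - X 3) * T) :
    ∃ P₁ Q₁ P₂ Q₂ T₂ : S4, P = (X 1 + X 2) * P₁ + ell * P₂ ∧
      Q = (X 1 - X 3) * Q₁ + ell * Q₂ ∧
      T = -(X 1 + X 2 - X 3) * (P₁ + Q₁) + ell * T₂ := by
  obtain ⟨n, hn⟩ := h
  have hT : T ∈ Ideal.span {ell, X 1 + X 2 - X 3} :=
    (isPrime_ell_u.mem_or_mem (x := (X 1 + X 2) * (X 1 - X 3)) (Ideal.mem_span_pair.2
      ⟨n, -((X 1 - X 3) * P + (X 1 + X 2) * Q), by linear_combination -hn⟩)).resolve_left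
      (notMem_span_pair_of_eval ![0, 1, 1, 2] (by simp [ell]; norm_num) (by simp; norm_num)
        (by simp; norm_num))
  have hQ : Q ∈ Ideal.span {ell, X 1 - X 3} :=
    (isPrime_ell_v.mem_or_mem (x := (X 1 + X 2 - X 3) * (X 1 + X 2)) (Ideal.mem_span_pair.2
      ⟨n, -((X 1 + X 2 - X 3) * P + (X 1 + X 2) * T), by linear_combination -hn⟩)).resolve_left
      (notMem_span_pair_of_eval ![1, 1, 1, 1] (by simp [ell]) (by simp)
        (by simp))
  have hP : P ∈ Ideal.span {ell, X 1 + X 2} :=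
    (isPrime_ell_t.mem_or_mem (x := (X 1 + X 2 - X 3) * (X 1 - X 3)) (Ideal.mem_span_pair.2
      ⟨n, -((X 1 + X 2 - X 3) * Q + (X 1 - X 3) * T), by linear_combination -hn⟩)).resolve_left
      (notMem_span_pair_of_eval ![-2, 1, -1, 2] (by simp [ell]) (by simp)
        (by simp; norm_num))
  obtain ⟨T₂, T₁, rfl⟩ := Ideal.mem_span_pair.1 hT
  obtain ⟨Q₂, Q₁, rfl⟩ := Ideal.mem_span_pair.1 hQ
  obtain ⟨P₂, P₁, rfl⟩ := Ideal.mem_span_pair.1 hP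
  have hs : ell ∣ P₁ + Q₁ + T₁ :=
    (prime_ell.dvd_or_dvd (a := (X 1 + X 2 - X 3) * (X 1 + X 2) * (X 1 - X 3))
      ⟨n - (X 1 + X 2 - X 3) * (X 1 - X 3) * P₂ - (X 1 + X 2 - X 3) * (X 1 + X 2) * Q₂ -
        (X 1 + X 2) * (X 1 - X 3) * T₂, by linear_combination hn⟩).resolve_left
      (not_dvd_of_eval ![2, 2, 1, 1] (by simp [ell]) (by simp; norm_num))
  obtain ⟨k, hk⟩ := hs
  refine ⟨P₁, Q₁, P₂, Q₂, T₂ + (X 1 + X 2 - X 3) * k, by ring, by ring, ?_⟩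
  linear_combination (X 1 + X 2 - X 3) * hk

theorem C_inv_mul_sixteen : (C (1 / 16) : S4) * 16 = 1 := by
  rw [← map_ofNat (C : ℂ →+* S4) 16, ← C_mul]
  norm_num

/-- A multiple of the Euler derivation that annihilates `f` is zero. -/
theorem eq_zero_of_smul_euler {h : S4} (hh : derMap fQ3 (h • X) = 0) : h = 0 := by
  rw [map_smul, derMap_fQ3_euler, smul_eq_mul] at hh
  have h8 : (8 : S4) ≠ 0 := by norm_num
  exact (mul_eq_zero.1 hh).resolve_right (mul_ne_zero h8 fQ3_ne_zero)

theorem mem_span_gens {a : Fin 4 → S4} (ha : a ∈ LinearMap.ker (derMap fQ3)) :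
    a ∈ Submodule.span S4 (Set.range gens) := by
  obtain ⟨b, p, q, r, h0, h1, h2, h3, n, hn⟩ := exists_of_mem_ker ha
  obtain ⟨P₁, Q₁, P₂, Q₂, T₂, hP, hQ, hT⟩ :=
    exists_of_ell_dvd (P := p - r) (Q := p - q) (T := q + r)
      ⟨n - (X 0 + X 1 + (X 1 + X 2 - X 3)) * p, by
        rw [ell] at hn ⊢
        linear_combination hn⟩
  let c : Fin 5 → S4 := ![P₂ + Q₂ + T₂, P₂ - Q₂ + T₂, Q₂ + T₂ - P₂, P₁, -(P₁ + Q₁)]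
  have hker : (16 : S4) • a - ∑ j, c j • gens j ∈ LinearMap.ker (derMap fQ3) :=
    sub_mem (Submodule.smul_mem _ _ ha)
      (sum_mem fun j _ => Submodule.smul_mem _ _ (gens_mem_ker j))
  obtain ⟨h, hh⟩ : ∃ h : S4, (16 : S4) • a - ∑ j, c j • gens j = h • X := by
    have hp2 : 2 * p = ell * c 0 + (X 2 + X 3) * c 3 + X 2 * c 4 := by
      change 2 * p = ell * (P₂ + Q₂ + T₂) + (X 2 + X 3) * P₁ + X 2 * -(P₁ + Q₁)
      linear_combination hP + hQ + hT
    have hq2 : 2 * q = ell * c 1 + ((X 1 + X 2) + (X 1 - X 3)) * c 3 +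
        ((X 1 + X 2 - X 3) + (X 1 - X 3)) * c 4 := by
      change 2 * q = ell * (P₂ - Q₂ + T₂) + ((X 1 + X 2) + (X 1 - X 3)) * P₁ +
        ((X 1 + X 2 - X 3) + (X 1 - X 3)) * -(P₁ + Q₁)
      linear_combination hP - hQ + hT
    have hr2 : 2 * r = ell * c 2 - ((X 1 + X 2) + (X 1 - X 3)) * c 3 + X 2 * c 4 := by
      change 2 * r = ell * (Q₂ + T₂ - P₂) - ((X 1 + X 2) + (X 1 - X 3)) * P₁ +
        X 2 * -(P₁ + Q₁)
      linear_combination hQ + hT - hP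
    clear_value c
    refine ⟨16 * b + (c 0 * eulerCoeff ell 0 0 (X 0 * (X 0 + X 1)) +
      c 1 * eulerCoeff 0 ell 0 (-(X 2 * (X 1 + X 2))) +
      c 2 * eulerCoeff 0 0 ell (X 3 * (X 1 - X 3)) +
      c 3 * eulerCoeff (X 2 + X 3) ((X 1 + X 2) + (X 1 - X 3)) (-((X 1 + X 2) + (X 1 - X 3)))
        ((X 2 + X 3) * (X 0 + X 1 + (X 1 + X 2 - X 3))) +
      c 4 * eulerCoeff (X 2) ((X 1 + X 2 - X 3) + (X 1 - X 3)) (X 2)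
        (X 2 * (X 0 + X 1 + (X 1 + X 2 - X 3)))), funext fun i => ?_⟩
    fin_cases i <;> simp [Fin.sum_univ_five, gens, syz, h0, h1, h2, h3]
    · linear_combination 8 * (X 0 * (X 0 + X 1)) * hp2
    · ring
    · linear_combination 8 * (X 2 * (X 1 + X 2)) * hq2
    · linear_combination 8 * (X 3 * (X 1 - X 3)) * hr2
  rw [hh] at hker
  rw [eq_zero_of_smul_euler hker, zero_smul, sub_eq_zero] at hh
  have ha16 : a = (C (1 / 16) : S4) • ∑ j, c j • gens j := by
    rw [← hh, smul_smul, C_inv_mul_sixteen, one_smul]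
  rw [ha16]
  exact Submodule.smul_mem _ _
    (sum_mem fun j _ => Submodule.smul_mem _ _ (Submodule.subset_span ⟨j, rfl⟩))

theorem span_gens : Submodule.span S4 (Set.range gens) = LinearMap.ker (derMap fQ3) := by
  refine le_antisymm (Submodule.span_le.2 ?_) fun a ha => mem_span_gens ha
  rintro _ ⟨j, rfl⟩
  exact gens_mem_ker j

theorem coeff_mul_eq_zero_of_isHomogeneous {p g : S4} {n : ℕ} (hg : g.IsHomogeneous n)
    {m : Fin 4 →₀ ℕ} (hm : m.degree < n) : coeff m (p * g) = 0 := by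
  rw [coeff_mul]
  refine Finset.sum_eq_zero fun x hx => ?_
  rw [hg.coeff_eq_zero, mul_zero]
  have := congrArg Finsupp.degree (Finset.HasAntidiagonal.mem_antidiagonal.1 hx)
  rw [map_add] at this
  omega

theorem le_degree_of_mem_span {ι : Type*} [Fintype ι] {g : ι → (Fin 4 → S4)} {n d : ℕ}
    (hg : ∀ j i, (g j i).IsHomogeneous n) {a : Fin 4 → S4}
    (ha : a ∈ Submodule.span S4 (Set.range g)) (h0 : a ≠ 0)
    (hd : ∀ i, (a i).IsHomogeneous d) : n ≤ d := by
  by_contra! hlt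
  refine h0 (funext fun i => ?_)
  obtain ⟨c, rfl⟩ := (Submodule.mem_span_range_iff_exists_fun S4).1 ha
  ext m
  by_cases hm : m.degree = d
  · simp only [Finset.sum_apply, Pi.smul_apply, smul_eq_mul, coeff_sum, Pi.zero_apply,
      coeff_zero]
    exact Finset.sum_eq_zero fun j _ =>
      coeff_mul_eq_zero_of_isHomogeneous (hg j i) (hm ▸ hlt)
  · rw [(hd i).coeff_eq_zero hm, Pi.zero_apply, coeff_zero]

end ARQ3

/-- The module `AR(f) = {(a₁,a₂,a₃,a₄) : a₁∂ₓf + a₂∂_yf + a₃∂_zf + a₄∂_wf = 0}`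
for `f = xyzw(x+y)(y+z)(y-w)(x-y-z+w)` is generated by five homogeneous syzygies, each of
degree `3`, and every nonzero homogeneous element of `AR(f)` has degree at least `3`. -/
theorem AR_Q3_generators :
    (∃ g : Fin 5 → (Fin 4 → S4),
      Submodule.span S4 (Set.range g) = LinearMap.ker (derMap fQ3) ∧
      ∀ j : Fin 5, ∀ i : Fin 4, (g j i).IsHomogeneous 3) ∧
    ∀ a ∈ LinearMap.ker (derMap fQ3), a ≠ 0 →
      ∀ d : ℕ, (∀ i : Fin 4, (a i).IsHomogeneous d) → 3 ≤ d := by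
  exact ⟨⟨ARQ3.gens, ARQ3.span_gens, ARQ3.gens_isHomogeneous⟩, fun _ ha h0 _ hd =>
    ARQ3.le_degree_of_mem_span ARQ3.gens_isHomogeneous (ARQ3.span_gens ▸ ha) h0 hd⟩
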